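/- Let a_n = 2^{−nⁿ·n³} and F = (⋃_{n∈ℕ} [a_{2n}/2, a_{2n}]×{0}) ∪ (⋃_{n∈ℕ} {0}×[a_{2n−1}/2, a_{2n−1}]) ⊂ ℝ². Then M_p^1(F) < ∞ for every p ∈ (0,∞). -/

import Mathlib

open MeasureTheory Metric Set Filter
open scoped ENNReal Topology Classical

noncomputable section

/-- The affine line through `x` and `y`. -/
def lineThrough {n : ℕ} (x y : EuclideanSpace ℝ (Fin n)) : Set (EuclideanSpace ℝ (Fin n)) :=
  {p | ∃ t : ℝ, p = x + t • (y - x)}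

/-- The inverse circumradius `κ(x,y,z)` of a triple of points, set to `0` when the
points are not pairwise distinct. -/
def kappa {n : ℕ} (x y z : EuclideanSpace ℝ (Fin n)) : ℝ≥0∞ :=
  if x ≠ y ∧ y ≠ z ∧ x ≠ z then
    ENNReal.ofReal (2 * Metric.infDist z (lineThrough x y) / (‖x - z‖ * ‖y - z‖))
  else 0

/-- `κ_G(x) = sup_{v,w ∈ X} κ(x,v,w)`. -/
def kappaG {n : ℕ} (X : Set (EuclideanSpace ℝ (Fin n))) (x : EuclideanSpace ℝ (Fin n)) : ℝ≥0∞ :=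
  ⨆ v ∈ X, ⨆ w ∈ X, kappa x v w

/-- `κ_i(x,y) = sup_{z ∈ X} κ(x,y,z)`. -/
def kappaI {n : ℕ} (X : Set (EuclideanSpace ℝ (Fin n))) (x y : EuclideanSpace ℝ (Fin n)) : ℝ≥0∞ :=
  ⨆ z ∈ X, kappa x y z

/-- The energy `U_p^α(X) = ∫_X κ_G(x)^p dH^α(x)`. -/
def energyU {n : ℕ} (p α : ℝ) (X : Set (EuclideanSpace ℝ (Fin n))) : ℝ≥0∞ :=
  ∫⁻ x in X, kappaG X x ^ p ∂ μH[α]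

/-- The energy `I_p^α(X) = ∫_X ∫_X κ_i(x,y)^p dH^α(x) dH^α(y)`. -/
def energyI {n : ℕ} (p α : ℝ) (X : Set (EuclideanSpace ℝ (Fin n))) : ℝ≥0∞ :=
  ∫⁻ y in X, ∫⁻ x in X, kappaI X x y ^ p ∂ μH[α] ∂ μH[α]

/-- The integral Menger curvature `M_p^α(X)`. -/
def energyM {n : ℕ} (p α : ℝ) (X : Set (EuclideanSpace ℝ (Fin n))) : ℝ≥0∞ :=
  ∫⁻ z in X, ∫⁻ y in X, ∫⁻ x in X, kappa x y z ^ p ∂ μH[α] ∂ μH[α] ∂ μH[α]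

/-- The open double cone about `x` in direction `s` with opening angle `ε`. -/
def cone {n : ℕ} (s : EuclideanSpace ℝ (Fin n)) (ε : ℝ) (x : EuclideanSpace ℝ (Fin n)) :
    Set (EuclideanSpace ℝ (Fin n)) :=
  {y | y ≠ x ∧
    min (InnerProductGeometry.angle (y - x) s) (InnerProductGeometry.angle (y - x) (-s)) < ε}

/-- `X` has an approximate `α`-tangent at `x`. -/
def HasApproxTangent {n : ℕ} (α : ℝ) (X : Set (EuclideanSpace ℝ (Fin n)))
    (x : EuclideanSpace ℝ (Fin n)) : Prop :=
  ∃ s : EuclideanSpace ℝ (Fin n), ‖s‖ = 1 ∧ ∀ ε > (0:ℝ),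
    Filter.Tendsto
      (fun r : ℝ => μH[α] ((X \ cone s ε x) ∩ Metric.closedBall x r) / ENNReal.ofReal (2 * r) ^ α)
      (𝓝[>] 0) (𝓝 0)

/-- `X` has a weak approximate `α`-tangent at `x`. -/
def HasWeakApproxTangent {n : ℕ} (α : ℝ) (X : Set (EuclideanSpace ℝ (Fin n)))
    (x : EuclideanSpace ℝ (Fin n)) : Prop :=
  ∃ ρ > (0:ℝ), ∃ s : ℝ → EuclideanSpace ℝ (Fin n), (∀ r ∈ Set.Ioo (0:ℝ) ρ, ‖s r‖ = 1) ∧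
    ∀ ε > (0:ℝ),
      Filter.Tendsto
        (fun r : ℝ =>
          μH[α] ((X \ cone (s r) ε x) ∩ Metric.closedBall x r) / ENNReal.ofReal (2 * r) ^ α)
        (𝓝[>] 0) (𝓝 0)

/-- Lower `α`-density of `X` at `x`. -/
def lowerDensity {n : ℕ} (α : ℝ) (X : Set (EuclideanSpace ℝ (Fin n)))
    (x : EuclideanSpace ℝ (Fin n)) : ℝ≥0∞ :=
  Filter.liminf
    (fun r : ℝ => μH[α] (X ∩ Metric.closedBall x r) / ENNReal.ofReal (2 * r) ^ α) (𝓝[>] 0)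

/-- Upper `α`-density of `X` at `x`. -/
def upperDensity {n : ℕ} (α : ℝ) (X : Set (EuclideanSpace ℝ (Fin n)))
    (x : EuclideanSpace ℝ (Fin n)) : ℝ≥0∞ :=
  Filter.limsup
    (fun r : ℝ => μH[α] (X ∩ Metric.closedBall x r) / ENNReal.ofReal (2 * r) ^ α) (𝓝[>] 0)


/-- `a_n = 2 ^ (-(n^n * n^3))`. -/
def aseq (n : ℕ) : ℝ := ((2 : ℝ) ^ (n ^ n * n ^ 3))⁻¹

/-- The set `F = (⋃_{n ≥ 1} [a_{2n}/2, a_{2n}] × {0}) ∪ (⋃_{n ≥ 1} {0} × [a_{2n-1}/2, a_{2n-1}])`. -/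
def Fset : Set (EuclideanSpace ℝ (Fin 2)) :=
  {p | ∃ n : ℕ, 1 ≤ n ∧ p 1 = 0 ∧ p 0 ∈ Set.Icc (aseq (2 * n) / 2) (aseq (2 * n))} ∪
  {p | ∃ n : ℕ, 1 ≤ n ∧ p 0 = 0 ∧ p 1 ∈ Set.Icc (aseq (2 * n - 1) / 2) (aseq (2 * n - 1))}

/-- Bound for the curvature, symmetric in the three points. -/
def curvR (x y z : EuclideanSpace ℝ (Fin 2)) : ℝ :=
  2 * |(y 0 - x 0) * (z 1 - x 1) - (y 1 - x 1) * (z 0 - x 0)| / (‖x - y‖ * ‖y - z‖ * ‖x - z‖)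

lemma curvR_swap (x y z : EuclideanSpace ℝ (Fin 2)) : curvR x y z = curvR y x z := by
  unfold curvR
  rw [norm_sub_rev x y]
  congr 1
  · congr 1
    rw [← abs_neg]; congr 1; ring
  · ring

lemma curvR_swap2 (x y z : EuclideanSpace ℝ (Fin 2)) : curvR x y z = curvR x z y := by
  unfold curvR
  rw [norm_sub_rev y z]
  congr 1
  · congr 1
    rw [← abs_neg]; congr 1; ring
  · ring

lemma norm_sq_two (x : EuclideanSpace ℝ (Fin 2)) : ‖x‖ ^ 2 = x 0 ^ 2 + x 1 ^ 2 := by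
  rw [EuclideanSpace.norm_sq_eq]; simp [Fin.sum_univ_two]

lemma infDist_le_cross (x y z : EuclideanSpace ℝ (Fin 2)) (hxy : x ≠ y) :
    Metric.infDist z (lineThrough x y) ≤
      |(y 0 - x 0) * (z 1 - x 1) - (y 1 - x 1) * (z 0 - x 0)| / ‖x - y‖ := by
  have hpos : 0 < ‖x - y‖ := norm_pos_iff.2 (sub_ne_zero.2 hxy)
  have hn : ‖x - y‖ ^ 2 = (x 0 - y 0) ^ 2 + (x 1 - y 1) ^ 2 := by
    rw [norm_sq_two]; simp
  set t : ℝ := ((z 0 - x 0) * (y 0 - x 0) + (z 1 - x 1) * (y 1 - x 1)) / ‖x - y‖ ^ 2 with ht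
  have hmem : x + t • (y - x) ∈ lineThrough x y := ⟨t, rfl⟩
  refine (Metric.infDist_le_dist_of_mem hmem).trans ?_
  rw [dist_eq_norm]
  refine (sq_le_sq₀ (by positivity) (by positivity)).1 ?_
  rw [norm_sq_two, div_pow, sq_abs]
  have htt : t * ‖x - y‖ ^ 2 = (z 0 - x 0) * (y 0 - x 0) + (z 1 - x 1) * (y 1 - x 1) := by
    rw [ht]; field_simp
  rw [le_div_iff₀ (by positivity)]
  simp only [PiLp.sub_apply, PiLp.add_apply, PiLp.smul_apply, smul_eq_mul]
  rw [hn] at htt ⊢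
  apply le_of_eq
  linear_combination (t * ((x 0 - y 0) ^ 2 + (x 1 - y 1) ^ 2) - ((z 0 - x 0) * (y 0 - x 0) + (z 1 - x 1) * (y 1 - x 1))) * htt

lemma kappa_le_curvR (x y z : EuclideanSpace ℝ (Fin 2)) :
    kappa x y z ≤ ENNReal.ofReal (curvR x y z) := by
  unfold kappa
  split_ifs with h
  · apply ENNReal.ofReal_le_ofReal
    have h1 : 0 < ‖x - y‖ := norm_pos_iff.2 (sub_ne_zero.2 h.1)
    have h2 : 0 < ‖y - z‖ := norm_pos_iff.2 (sub_ne_zero.2 h.2.1)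
    have h3 : 0 < ‖x - z‖ := norm_pos_iff.2 (sub_ne_zero.2 h.2.2)
    have := infDist_le_cross x y z h.1
    unfold curvR
    rw [div_le_div_iff₀ (by positivity) (by positivity)]
    rw [le_div_iff₀ h1] at this
    have := mul_le_mul_of_nonneg_right this (by positivity : 0 ≤ 2 * (‖x - z‖ * ‖y - z‖))
    linarith
  · simp

lemma curvR_nonneg (x y z : EuclideanSpace ℝ (Fin 2)) : 0 ≤ curvR x y z := by
  unfold curvR; positivity

lemma le_norm_sub_of {b c : Fin 2} (hbc : (b = 0 ∧ c = 1) ∨ (b = 1 ∧ c = 0))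
    (x z : EuclideanSpace ℝ (Fin 2)) (hx : x c = 0) (hz : z b = 0) :
    ‖x‖ ≤ ‖x - z‖ ∧ ‖z‖ ≤ ‖x - z‖ := by
  constructor <;> refine (sq_le_sq₀ (by positivity) (by positivity)).1 ?_ <;> rw [norm_sq_two, norm_sq_two] <;>
    rcases hbc with ⟨rfl, rfl⟩ | ⟨rfl, rfl⟩ <;> simp [hx, hz] <;> positivity

lemma curvR_core {b c : Fin 2} (hbc : (b = 0 ∧ c = 1) ∨ (b = 1 ∧ c = 0))
    (x y z : EuclideanSpace ℝ (Fin 2)) (hx : x c = 0) (hy : y c = 0) (hz : z b = 0)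
    (hx0 : 0 < ‖x‖) (hy0 : 0 < ‖y‖) (hz0 : 0 < ‖z‖) :
    curvR x y z ≤ 2 / ‖x‖ ∧ curvR x y z ≤ 2 / ‖z‖ := by
  obtain ⟨h1, h2⟩ := le_norm_sub_of hbc x z hx hz
  obtain ⟨h3, h4⟩ := le_norm_sub_of hbc y z hy hz
  have hD : |(y 0 - x 0) * (z 1 - x 1) - (y 1 - x 1) * (z 0 - x 0)| ≤ ‖x - y‖ * ‖z‖ := by
    refine abs_le_of_sq_le_sq ?_ (by positivity)
    rw [mul_pow, norm_sq_two, norm_sq_two]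
    rcases hbc with ⟨rfl, rfl⟩ | ⟨rfl, rfl⟩ <;> simp [hx, hy, hz] <;> apply le_of_eq <;> ring
  have key : curvR x y z ≤ 2 / ‖x - z‖ := by
    unfold curvR
    rcases eq_or_ne x y with rfl | hne
    · simp; positivity
    have hp : 0 < ‖x - y‖ := norm_pos_iff.2 (sub_ne_zero.2 hne)
    have hp2 : 0 < ‖x - z‖ := by linarith
    have hp3 : 0 < ‖y - z‖ := by linarith
    rw [div_le_div_iff₀ (by positivity) (by positivity)]
    have : ‖x - y‖ * ‖z‖ ≤ ‖x - y‖ * ‖y - z‖ := by gcongr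
    have := mul_le_mul_of_nonneg_right (hD.trans this) (by positivity : 0 ≤ 2 * ‖x - z‖)
    linarith
  exact ⟨key.trans (by gcongr), key.trans (by gcongr)⟩

lemma curvR_zero {c : Fin 2} (x y z : EuclideanSpace ℝ (Fin 2))
    (hx : x c = 0) (hy : y c = 0) (hz : z c = 0) : curvR x y z = 0 := by
  unfold curvR
  fin_cases c <;> simp at hx hy hz <;> simp [hx, hy, hz]

/-- exponents -/
def eexp (n : ℕ) : ℕ := n ^ n * n ^ 3

lemma eexp_mono {m n : ℕ} (h : m ≤ n) : eexp m ≤ eexp n := by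
  unfold eexp
  rcases Nat.eq_zero_or_pos m with rfl | hm
  · simp
  · exact Nat.mul_le_mul ((Nat.pow_le_pow_left h m).trans (Nat.pow_le_pow_right (by omega) h))
      (Nat.pow_le_pow_left h 3)

lemma eexp_succ (m : ℕ) : (m + 1) * eexp m ≤ eexp (m + 1) := by
  unfold eexp
  have h1 : m ^ m ≤ (m + 1) ^ m := Nat.pow_le_pow_left (by omega) _
  have h2 : m ^ 3 ≤ (m + 1) ^ 3 := Nat.pow_le_pow_left (by omega) _
  calc (m + 1) * (m ^ m * m ^ 3) ≤ (m + 1) * ((m + 1) ^ m * (m + 1) ^ 3) := by gcongr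
    _ = _ := by ring

lemma le_eexp (n : ℕ) : n ≤ eexp n := by
  unfold eexp
  rcases Nat.eq_zero_or_pos n with rfl | hm
  · simp
  · calc n ≤ n ^ 3 := Nat.le_self_pow (by omega) n
      _ ≤ _ := Nat.le_mul_of_pos_left _ (by positivity)

lemma aseq_eq (n : ℕ) : aseq n = (2 : ℝ) ^ (-(eexp n : ℝ)) := by
  unfold aseq
  rw [Real.rpow_neg (by norm_num), Real.rpow_natCast, eexp]

lemma aseq_pos (n : ℕ) : 0 < aseq n := by unfold aseq; positivity

lemma aseq_le_one (n : ℕ) : aseq n ≤ 1 := by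
  unfold aseq; exact inv_le_one_of_one_le₀ (one_le_pow₀ (by norm_num))

lemma exp_bound (p : ℝ) (hp : 0 < p) : ∃ C : ℝ, 0 ≤ C ∧ ∀ i j : ℕ, i < j →
    p * eexp i ≤ C + eexp j / 2 := by
  refine ⟨p * eexp ⌈2 * p⌉₊, by positivity, fun i j hij => ?_⟩
  rcases le_total i ⌈2 * p⌉₊ with h | h
  · have : (eexp i : ℝ) ≤ eexp ⌈2 * p⌉₊ := by exact_mod_cast eexp_mono h
    have h2 := mul_le_mul_of_nonneg_left this hp.le
    have : (0 : ℝ) ≤ eexp j := by positivity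
    linarith
  · have h1 : 2 * p ≤ i := (Nat.le_ceil _).trans (by exact_mod_cast h)
    have h2 : ((i + 1 : ℕ) * eexp i : ℝ) ≤ eexp j := by
      exact_mod_cast (eexp_succ i).trans (eexp_mono hij)
    push_cast at h2
    have h3 : (2 * p) * eexp i ≤ (i + 1) * eexp i := by gcongr; linarith
    have : 0 ≤ p * eexp ⌈2 * p⌉₊ := by positivity
    linarith

/-- The two segments with index `n`. -/
def Sset (n : ℕ) : Set (EuclideanSpace ℝ (Fin 2)) :=
  {p | p 1 = 0 ∧ p 0 ∈ Set.Icc (aseq n / 2) (aseq n)} ∪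
  {p | p 0 = 0 ∧ p 1 ∈ Set.Icc (aseq n / 2) (aseq n)}

lemma norm_of_zero1 (x : EuclideanSpace ℝ (Fin 2)) (h : x 1 = 0) (h0 : 0 ≤ x 0) : ‖x‖ = x 0 := by
  rw [EuclideanSpace.norm_eq]; simp [Fin.sum_univ_two, h, Real.sqrt_sq h0]

lemma norm_of_zero0 (x : EuclideanSpace ℝ (Fin 2)) (h : x 0 = 0) (h0 : 0 ≤ x 1) : ‖x‖ = x 1 := by
  rw [EuclideanSpace.norm_eq]; simp [Fin.sum_univ_two, h, Real.sqrt_sq h0]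

lemma norm_Sset {n : ℕ} {x : EuclideanSpace ℝ (Fin 2)} (h : x ∈ Sset n) :
    aseq n / 2 ≤ ‖x‖ ∧ ‖x‖ ≤ aseq n := by
  have := aseq_pos n
  rcases h with ⟨h1, h2, h3⟩ | ⟨h1, h2, h3⟩
  · rw [norm_of_zero1 x h1 (by linarith)]; exact ⟨h2, h3⟩
  · rw [norm_of_zero0 x h1 (by linarith)]; exact ⟨h2, h3⟩

lemma measurable_Sset (n : ℕ) : MeasurableSet (Sset n) := by
  have m0 : Measurable (fun p : EuclideanSpace ℝ (Fin 2) => p 0) := by fun_prop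
  have m1 : Measurable (fun p : EuclideanSpace ℝ (Fin 2) => p 1) := by fun_prop
  exact ((m1 (measurableSet_singleton 0)).inter (m0 measurableSet_Icc)).union
    ((m0 (measurableSet_singleton 0)).inter (m1 measurableSet_Icc))

lemma measure_Sset (n : ℕ) : μH[1] (Sset n) ≤ ENNReal.ofReal (2 * aseq n) := by
  have hs : Sset n ⊆ segment ℝ 0 (EuclideanSpace.single 0 (aseq n)) ∪
      segment ℝ 0 (EuclideanSpace.single 1 (aseq n)) := by
    have ha := aseq_pos n
    have key : ∀ t, aseq n / 2 ≤ t → t ≤ aseq n → t / aseq n ∈ Set.Icc (0 : ℝ) 1 := by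
      intro t h1 h2
      exact ⟨div_nonneg (by linarith) ha.le, (div_le_one ha).2 h2⟩
    rintro x (⟨h1, h2, h3⟩ | ⟨h1, h2, h3⟩)
    · left
      rw [segment_eq_image]
      refine ⟨_, key _ h2 h3, ?_⟩
      ext i
      fin_cases i
      · simp; field_simp
      · simp [h1]
    · right
      rw [segment_eq_image]
      refine ⟨_, key _ h2 h3, ?_⟩
      ext i
      fin_cases i
      · simp [h1]
      · simp; field_simp
  refine (measure_mono hs).trans ((measure_union_le _ _).trans ?_)
  rw [hausdorffMeasure_segment, hausdorffMeasure_segment, two_mul,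
    ENNReal.ofReal_add (aseq_pos n).le (aseq_pos n).le]
  simp [edist_dist, dist_eq_norm, abs_of_pos (aseq_pos n)]

lemma Fset_data {x : EuclideanSpace ℝ (Fin 2)} (h : x ∈ Fset) :
    ∃ n, 1 ≤ n ∧ x ∈ Sset n ∧ ((x 1 = 0 ∧ n % 2 = 0) ∨ (x 0 = 0 ∧ n % 2 = 1)) := by
  rcases h with ⟨n, hn, h1, h2⟩ | ⟨n, hn, h1, h2⟩
  · exact ⟨2 * n, by omega, Or.inl ⟨h1, h2⟩, Or.inl ⟨h1, by omega⟩⟩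
  · exact ⟨2 * n - 1, by omega, Or.inr ⟨h1, h2⟩, Or.inr ⟨h1, by omega⟩⟩

lemma measurable_Fset : MeasurableSet Fset := by
  have m0 : Measurable (fun p : EuclideanSpace ℝ (Fin 2) => p 0) := by fun_prop
  have m1 : Measurable (fun p : EuclideanSpace ℝ (Fin 2) => p 1) := by fun_prop
  have : Fset = (⋃ n : ℕ, {p : EuclideanSpace ℝ (Fin 2) | 1 ≤ n ∧ p 1 = 0 ∧
        p 0 ∈ Set.Icc (aseq (2 * n) / 2) (aseq (2 * n))}) ∪
      (⋃ n : ℕ, {p : EuclideanSpace ℝ (Fin 2) | 1 ≤ n ∧ p 0 = 0 ∧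
        p 1 ∈ Set.Icc (aseq (2 * n - 1) / 2) (aseq (2 * n - 1))}) := by
    ext p; simp only [Fset, Set.mem_union, Set.mem_ofPred_eq, Set.mem_iUnion]
  rw [this]
  refine (MeasurableSet.iUnion fun n => ?_).union (MeasurableSet.iUnion fun n => ?_)
  · exact (MeasurableSet.const _).inter
      ((m1 (measurableSet_singleton 0)).inter (m0 measurableSet_Icc))
  · exact (MeasurableSet.const _).inter
      ((m0 (measurableSet_singleton 0)).inter (m1 measurableSet_Icc))

/-- The weight. -/
def wt (x : EuclideanSpace ℝ (Fin 2)) : ℝ := ‖x‖ ^ (-(1 / 2) : ℝ)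

lemma norm_Fset {x : EuclideanSpace ℝ (Fin 2)} (h : x ∈ Fset) : 0 < ‖x‖ ∧ ‖x‖ ≤ 1 := by
  obtain ⟨n, -, h, -⟩ := Fset_data h
  have := norm_Sset h
  have := aseq_pos n
  have := aseq_le_one n
  constructor <;> linarith

lemma one_le_wt {x : EuclideanSpace ℝ (Fin 2)} (h : x ∈ Fset) : 1 ≤ wt x :=
  Real.one_le_rpow_of_pos_of_le_one_of_nonpos (norm_Fset h).1 (norm_Fset h).2 (by norm_num)

lemma wt_nonneg (x : EuclideanSpace ℝ (Fin 2)) : 0 ≤ wt x := by unfold wt; positivity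

lemma one_side {p C : ℝ} (hp : 0 < p) (hC : ∀ i j : ℕ, i < j → p * eexp i ≤ C + eexp j / 2)
    {u v : EuclideanSpace ℝ (Fin 2)} {i j : ℕ} (hu : u ∈ Sset i) (hv : v ∈ Sset j) (hij : i < j)
    {R : ℝ} (hR0 : 0 ≤ R) (hR : R ≤ 2 / ‖u‖) : R ^ p ≤ 2 ^ (2 * p + C) * wt v := by
  have hai := aseq_pos i
  have haj := aseq_pos j
  have h1 : R ≤ 2 ^ (2 + (eexp i : ℝ)) := by
    refine hR.trans ?_
    rw [div_le_iff₀ (by linarith [norm_Sset hu])]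
    have : (2 : ℝ) ^ (2 + (eexp i : ℝ)) * (aseq i / 2) = 2 := by
      rw [aseq_eq, Real.rpow_add (by norm_num), mul_assoc, mul_div_assoc',
        ← Real.rpow_add (by norm_num)]
      norm_num
    rw [← this]
    gcongr
    rw [this]
    exact (norm_Sset hu).1
  have h2 : (2 : ℝ) ^ ((eexp j : ℝ) / 2) ≤ wt v := by
    have : aseq j ^ (-(1 / 2) : ℝ) ≤ wt v :=
      Real.rpow_le_rpow_of_nonpos (by linarith [norm_Sset hv]) (norm_Sset hv).2 (by norm_num)
    refine le_trans (le_of_eq ?_) this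
    rw [aseq_eq, ← Real.rpow_mul (by norm_num)]
    congr 1; ring
  calc R ^ p ≤ (2 ^ (2 + (eexp i : ℝ))) ^ p := by gcongr
    _ = 2 ^ (2 * p + p * eexp i) := by rw [← Real.rpow_mul (by norm_num)]; congr 1; ring
    _ ≤ 2 ^ (2 * p + C + eexp j / 2) := by
        apply Real.rpow_le_rpow_of_exponent_le (by norm_num); linarith [hC i j hij]
    _ = 2 ^ (2 * p + C) * 2 ^ ((eexp j : ℝ) / 2) := Real.rpow_add (by norm_num) _ _
    _ ≤ _ := by gcongr

lemma mixed {p C : ℝ} (hp : 0 < p) (hC : ∀ i j : ℕ, i < j → p * eexp i ≤ C + eexp j / 2)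
    {b c : Fin 2} (hbc : (b = 0 ∧ c = 1) ∨ (b = 1 ∧ c = 0))
    {x y z : EuclideanSpace ℝ (Fin 2)} (hxF : x ∈ Fset) (hyF : y ∈ Fset) (hzF : z ∈ Fset)
    {i k : ℕ} (hi : x ∈ Sset i) (hk : z ∈ Sset k) (hik : i ≠ k)
    (hx : x c = 0) (hy : y c = 0) (hz : z b = 0) :
    curvR x y z ^ p ≤ 2 ^ (2 * p + C) * (wt x * wt y * wt z) := by
  obtain ⟨h1, h2⟩ := curvR_core hbc x y z hx hy hz (norm_Fset hxF).1 (norm_Fset hyF).1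
    (norm_Fset hzF).1
  have wx := one_le_wt hxF
  have wy := one_le_wt hyF
  have wz := one_le_wt hzF
  have h0 := curvR_nonneg x y z
  rcases lt_or_gt_of_ne hik with h | h
  · refine (one_side hp hC hi hk h h0 h1).trans ?_
    gcongr
    exact le_mul_of_one_le_left (by linarith) (one_le_mul_of_one_le_of_one_le wx wy)
  · refine (one_side hp hC hk hi h h0 h2).trans ?_
    gcongr
    rw [mul_assoc]
    exact le_mul_of_one_le_right (by linarith) (one_le_mul_of_one_le_of_one_le wy wz)

lemma pointwise {p C : ℝ} (hp : 0 < p) (hC : ∀ i j : ℕ, i < j → p * eexp i ≤ C + eexp j / 2)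
    {x y z : EuclideanSpace ℝ (Fin 2)} (hx : x ∈ Fset) (hy : y ∈ Fset) (hz : z ∈ Fset) :
    curvR x y z ^ p ≤ 2 ^ (2 * p + C) * (wt x * wt y * wt z) := by
  have hzero : curvR x y z = 0 → curvR x y z ^ p ≤ 2 ^ (2 * p + C) * (wt x * wt y * wt z) := by
    intro h
    rw [h, Real.zero_rpow hp.ne']
    have := wt_nonneg x
    have := wt_nonneg y
    have := wt_nonneg z
    positivity
  obtain ⟨i, -, hi, ax⟩ := Fset_data hx
  obtain ⟨j, -, hj, ay⟩ := Fset_data hy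
  obtain ⟨k, -, hk, az⟩ := Fset_data hz
  have b0 : ((0 : Fin 2) = 0 ∧ (1 : Fin 2) = 1) ∨ ((0 : Fin 2) = 1 ∧ (1 : Fin 2) = 0) := by simp
  have b1 : ((1 : Fin 2) = 0 ∧ (0 : Fin 2) = 1) ∨ ((1 : Fin 2) = 1 ∧ (0 : Fin 2) = 0) := by simp
  have e1 : curvR x y z = curvR x z y := curvR_swap2 x y z
  have e2 : curvR x y z = curvR y z x := by rw [curvR_swap, curvR_swap2]
  have m1 : wt x * wt y * wt z = wt x * wt z * wt y := by ring
  have m2 : wt x * wt y * wt z = wt y * wt z * wt x := by ring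
  rcases ax with ⟨ax, pi⟩ | ⟨ax, pi⟩ <;> rcases ay with ⟨ay, pj⟩ | ⟨ay, pj⟩ <;>
    rcases az with ⟨az, pk⟩ | ⟨az, pk⟩
  · exact hzero (curvR_zero x y z ax ay az)
  · exact mixed hp hC b0 hx hy hz hi hk (by omega) ax ay az
  · rw [e1, m1]; exact mixed hp hC b0 hx hz hy hi hj (by omega) ax az ay
  · rw [e2, m2]; exact mixed hp hC b1 hy hz hx hj hi (by omega) ay az ax
  · rw [e2, m2]; exact mixed hp hC b0 hy hz hx hj hi (by omega) ay az ax
  · rw [e1, m1]; exact mixed hp hC b1 hx hz hy hi hj (by omega) ax az ay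
  · exact mixed hp hC b1 hx hy hz hi hk (by omega) ax ay az
  · exact hzero (curvR_zero x y z ax ay az)

lemma lintegral_wt : ∫⁻ x in Fset, ENNReal.ofReal (wt x) ∂ μH[1] < ⊤ := by
  have hsub : Fset ⊆ ⋃ n, Sset n := fun x hx => by
    obtain ⟨n, -, h, -⟩ := Fset_data hx
    exact Set.mem_iUnion.2 ⟨n, h⟩
  have hr : (0 : ℝ) < 2 ^ (-(1 / 2) : ℝ) := by positivity
  have hr1 : (2 : ℝ) ^ (-(1 / 2) : ℝ) < 1 := Real.rpow_lt_one_of_one_lt_of_neg (by norm_num) (by norm_num)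
  have hn : ∀ n, ∫⁻ x in Sset n, ENNReal.ofReal (wt x) ∂ μH[1] ≤
      ENNReal.ofReal (2 ^ (3 / 2 : ℝ) * (2 ^ (-(1 / 2) : ℝ)) ^ n) := by
    intro n
    have ha := aseq_pos n
    calc ∫⁻ x in Sset n, ENNReal.ofReal (wt x) ∂ μH[1]
        ≤ ∫⁻ x in Sset n, ENNReal.ofReal ((aseq n / 2) ^ (-(1 / 2) : ℝ)) ∂ μH[1] := by
          apply setLIntegral_mono' (measurable_Sset n)
          intro x hx
          apply ENNReal.ofReal_le_ofReal
          exact Real.rpow_le_rpow_of_nonpos (by positivity) (norm_Sset hx).1 (by norm_num)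
      _ = ENNReal.ofReal ((aseq n / 2) ^ (-(1 / 2) : ℝ)) * μH[1] (Sset n) := by
          rw [setLIntegral_const]
      _ ≤ ENNReal.ofReal ((aseq n / 2) ^ (-(1 / 2) : ℝ)) * ENNReal.ofReal (2 * aseq n) := by
          gcongr; exact measure_Sset n
      _ = ENNReal.ofReal ((aseq n / 2) ^ (-(1 / 2) : ℝ) * (2 * aseq n)) := by
          rw [← ENNReal.ofReal_mul (by positivity)]
      _ ≤ _ := by
          apply ENNReal.ofReal_le_ofReal
          have e : aseq n / 2 = 2 ^ (-(eexp n : ℝ) - 1) := by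
            rw [aseq_eq, Real.rpow_sub_one (by norm_num)]
          have e2 : 2 * aseq n = 2 ^ (1 - (eexp n : ℝ)) := by
            rw [aseq_eq, sub_eq_add_neg, Real.rpow_add (by norm_num), Real.rpow_one]
          rw [e, e2, ← Real.rpow_mul (by norm_num), ← Real.rpow_add (by norm_num),
            ← Real.rpow_natCast, ← Real.rpow_mul (by norm_num), ← Real.rpow_add (by norm_num)]
          apply Real.rpow_le_rpow_of_exponent_le (by norm_num)
          have : (n : ℝ) ≤ eexp n := by exact_mod_cast le_eexp n
          linarith
  have hsum : Summable (fun n : ℕ => (2 : ℝ) ^ (3 / 2 : ℝ) * (2 ^ (-(1 / 2) : ℝ)) ^ n) :=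
    (summable_geometric_of_lt_one hr.le hr1).mul_left _
  calc _ ≤ ∫⁻ x in ⋃ n, Sset n, ENNReal.ofReal (wt x) ∂ μH[1] := lintegral_mono_set hsub
    _ ≤ ∑' n, ∫⁻ x in Sset n, ENNReal.ofReal (wt x) ∂ μH[1] := lintegral_iUnion_le _ _
    _ ≤ ∑' n, ENNReal.ofReal (2 ^ (3 / 2 : ℝ) * (2 ^ (-(1 / 2) : ℝ)) ^ n) :=
        ENNReal.tsum_le_tsum hn
    _ < ⊤ := hsum.tsum_ofReal_lt_top

theorem Fset_energyM_lt_top (p : ℝ) (hp : 0 < p) : energyM p 1 Fset < ⊤ := by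
  obtain ⟨C, hC0, hC⟩ := exp_bound p hp
  set K : ℝ≥0∞ := ENNReal.ofReal (2 ^ (2 * p + C)) with hK
  set W : EuclideanSpace ℝ (Fin 2) → ℝ≥0∞ := fun x => ENNReal.ofReal (wt x) with hW
  set I : ℝ≥0∞ := ∫⁻ x in Fset, W x ∂ μH[1] with hI
  have hIt : I < ⊤ := lintegral_wt
  have hpt : ∀ x ∈ Fset, ∀ y ∈ Fset, ∀ z ∈ Fset, kappa x y z ^ p ≤ K * W z * W y * W x := by
    intro x hx y hy z hz
    calc kappa x y z ^ p ≤ (ENNReal.ofReal (curvR x y z)) ^ p :=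
          ENNReal.rpow_le_rpow (kappa_le_curvR x y z) hp.le
      _ = ENNReal.ofReal (curvR x y z ^ p) :=
          ENNReal.ofReal_rpow_of_nonneg (curvR_nonneg x y z) hp.le
      _ ≤ ENNReal.ofReal (2 ^ (2 * p + C) * (wt x * wt y * wt z)) :=
          ENNReal.ofReal_le_ofReal (pointwise hp hC hx hy hz)
      _ = K * W z * W y * W x := by
          have := wt_nonneg x
          have := wt_nonneg y
          rw [ENNReal.ofReal_mul (by positivity), ENNReal.ofReal_mul (by positivity),
            ENNReal.ofReal_mul (by positivity)]
          simp only [hK, hW]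
          ring
  have hWt : ∀ x, W x ≠ ⊤ := fun x => ENNReal.ofReal_ne_top
  have hKt : K ≠ ⊤ := ENNReal.ofReal_ne_top
  have hle : energyM p 1 Fset ≤ K * I * I * I := by
    unfold energyM
    calc _ ≤ ∫⁻ z in Fset, K * I * I * W z ∂ μH[1] := by
          apply setLIntegral_mono' measurable_Fset
          intro z hz
          calc _ ≤ ∫⁻ y in Fset, K * W z * I * W y ∂ μH[1] := by
                apply setLIntegral_mono' measurable_Fset
                intro y hy
                calc _ ≤ ∫⁻ x in Fset, K * W z * W y * W x ∂ μH[1] :=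
                      setLIntegral_mono' measurable_Fset fun x hx => hpt x hx y hy z hz
                  _ = K * W z * W y * I := lintegral_const_mul' _ _
                      (ENNReal.mul_ne_top (ENNReal.mul_ne_top hKt (hWt z)) (hWt y))
                  _ = _ := by ring
            _ = K * W z * I * I := lintegral_const_mul' _ _
                      (ENNReal.mul_ne_top (ENNReal.mul_ne_top hKt (hWt z)) hIt.ne)
            _ = _ := by ring
      _ = _ := lintegral_const_mul' _ _
                (ENNReal.mul_ne_top (ENNReal.mul_ne_top hKt hIt.ne) hIt.ne)
  exact hle.trans_lt (ENNReal.mul_lt_top (ENNReal.mul_lt_top (ENNReal.mul_lt_top hKt.lt_top hIt)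
    hIt) hIt)

end
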